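/- There is no 2-(28,4,3) design admitting a flag-transitive automorphism group G with PSL(2,8) ⊴ G ≤ PΓL(2,8). (Such a design would have b = 189 blocks and replication number r = 27, forcing G = PΓL(2,8) acting on the 28 cosets of a subgroup D_{18}:C₃, and a nontrivial 2-element would fix a block pointwise, identifying the design with the Ree unital R(3), which has λ = 1 — a contradiction.) -/

import Mathlib

/-!
Why no such design exists. Write `X` for the normal subgroup isomorphic to `PSL(2,8) ≅ SL(2,8)`.
Counting gives `r = 27` blocks on each point and `b = 189` blocks.

*`X` is transitive on points.* Let `O` be the `X`-orbit of a point `x`. As `X` is normal, the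
stabilizer of `x` in `G` preserves `O`, and by flag-transitivity it is transitive on the blocks
through `x`; so these blocks all meet `O \ {x}` in the same number `c ≤ 3` of points. Counting
pairs `(y, B)` with `y ∈ O \ {x}` and `x, y ∈ B` gives `27 c = 3 (|O| - 1)`, so
`|O| ∈ {1, 10, 19, 28}`. Since `|O|` divides `504` and `X` acts faithfully, `|O| = 28`
(`ncard_orbit_eq_card`).

*Every block is fixed pointwise by an involution of `X`.* A subgroup `S` of `X` of order `8` fixes
one of the `189` blocks, `189` being odd. It is elementary abelian, hence is not a Sylow
`2`-subgroup of `Sym(4)` (which contains a `4`-cycle), so some involution of `S` fixes this block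
pointwise. All blocks are `G`-conjugate (`exists_involution_fixing_block`).

*An involution fixes at most four points.* The `63` involutions of `X` are conjugate, so each fixes
the same number `f` of points; by point-transitivity each point stabilizer, of order `18`, contains
the same number `i ≤ 17` of involutions. From `63 f = 28 i` one gets `f ≤ 4`
(`ncard_fixedPoints_le`).

Hence a block is the full fixed point set of an involution, which gives `189 ≤ 63`.
-/

open scoped Pointwise
open Matrix

namespace FT

variable {Pt : Type*}

/-- `IsDesign 𝓑 k lam` says that the family `𝓑` of subsets of the point set `Pt` is the
block set of a `2-(v, k, lam)` design: every block has `k` points and any two distinct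
points lie on exactly `lam` common blocks. -/
structure IsDesign (𝓑 : Set (Set Pt)) (k lam : ℕ) : Prop where
  block_card : ∀ B ∈ 𝓑, Nat.card B = k
  pair_count : ∀ x y : Pt, x ≠ y → Nat.card {B : Set Pt | B ∈ 𝓑 ∧ x ∈ B ∧ y ∈ B} = lam

/-- The group `G` acts on the design with point set `Pt` and block set `𝓑` as a group of
automorphisms. -/
def ActsOn (G : Type*) [Group G] [MulAction G Pt] (𝓑 : Set (Set Pt)) : Prop :=
  ∀ (g : G), ∀ B ∈ 𝓑, g • B ∈ 𝓑

/-- The group `G` is transitive on the flags (incident point-block pairs) of the design. -/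
def FlagTransitive (G : Type*) [Group G] [MulAction G Pt] (𝓑 : Set (Set Pt)) : Prop :=
  ∀ B ∈ 𝓑, ∀ C ∈ 𝓑, ∀ x ∈ B, ∀ y ∈ C, ∃ g : G, g • B = C ∧ g • x = y

/-- The action of `G` on `Pt` is primitive: it is transitive and every block of
imprimitivity is trivial. -/
def PointPrimitive (G : Type*) [Group G] (Pt : Type*) [MulAction G Pt] : Prop :=
  MulAction.IsPretransitive G Pt ∧
    ∀ s : Set Pt, MulAction.IsBlock G s → s.Subsingleton ∨ s = Set.univ

/-- The number of blocks of `𝓑` through the point `x` (the replication number, for a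
flag-transitive design). -/
noncomputable def repNum (𝓑 : Set (Set Pt)) (x : Pt) : ℕ :=
  Nat.card {B : Set Pt | B ∈ 𝓑 ∧ x ∈ B}

/-- The projective general linear group `PGL(2,K)`, as the quotient of `GL(2,K)` by its
center. -/
abbrev PGL2 (K : Type*) [Field K] :=
  GL (Fin 2) K ⧸ Subgroup.center (GL (Fin 2) K)

/-- The projective special linear group `PSL(2,K)`. -/
abbrev PSL2 (K : Type*) [Field K] := Matrix.ProjectiveSpecialLinearGroup (Fin 2) K

end FT

open FT

/-! ### `SL(2, K)` in characteristic two -/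

section SL

/-- The matrix with rows `(a, b)` and `(c, d)` as an element of `SL(2, K)`. -/
def mkSL2 {K : Type*} [Field K] (a b c d : K) (h : a * d - b * c = 1) :
    Matrix.SpecialLinearGroup (Fin 2) K :=
  ⟨!![a, b; c, d], by rw [det_fin_two_of, h]⟩

theorem coe_mkSL2 {K : Type*} [Field K] (a b c d : K) (h : a * d - b * c = 1) :
    (mkSL2 a b c d h : Matrix (Fin 2) (Fin 2) K) = !![a, b; c, d] := rfl

variable {K : Type*} [Field K]

theorem card_SL2_of_card_eq_eight [Finite K] (hK : Nat.card K = 8) :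
    Nat.card (Matrix.SpecialLinearGroup (Fin 2) K) = 504 := by
  classical
  have := Fintype.ofFinite K
  have hq : Fintype.card K = 8 := by rw [← Nat.card_eq_fintype_card, hK]
  have hGL : Nat.card (GL (Fin 2) K) = 3528 := by
    rw [Matrix.card_GL_field, hq]; simp [Fin.prod_univ_two]
  let d : GL (Fin 2) K →* Kˣ := GeneralLinearGroup.det
  have hsurj : Function.Surjective d := GeneralLinearGroup.det_surjective
  have hker : d.ker =
      (Matrix.SpecialLinearGroup.toGL : Matrix.SpecialLinearGroup (Fin 2) K →* _).range := by
    ext g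
    constructor
    · intro hg
      refine ⟨⟨(g : Matrix (Fin 2) (Fin 2) K), ?_⟩, by ext; rfl⟩
      exact congrArg Units.val (MonoidHom.mem_ker.mp hg)
    · rintro ⟨s, rfl⟩
      rw [MonoidHom.mem_ker]
      ext
      exact s.2
  have h1 := d.ker.card_mul_index
  rw [Subgroup.index_ker, MonoidHom.range_eq_top.mpr hsurj, Subgroup.card_top, hGL, hker,
    Nat.card_congr (MonoidHom.ofInjective Matrix.SpecialLinearGroup.toGL_injective).symm.toEquiv,
    Nat.card_units, hK] at h1
  omega

variable [CharP K 2]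

theorem center_SL2_eq_bot : Subgroup.center (Matrix.SpecialLinearGroup (Fin 2) K) = ⊥ := by
  rw [eq_bot_iff]
  intro A hA
  obtain ⟨r, hr, hA⟩ := Matrix.SpecialLinearGroup.mem_center_iff.mp hA
  have hr1 : r = 1 := by
    have : r ^ 2 = 1 := by simpa using hr
    have h2 : (r - 1) ^ 2 = 0 := by rw [sub_pow_char, this]; simp
    exact sub_eq_zero.mp (pow_eq_zero_iff two_ne_zero |>.mp h2)
  rw [Subgroup.mem_bot]
  apply Subtype.ext
  rw [← hA, hr1]; simp

/-- The Cayley–Hamilton identity for `SL(2, K)` in characteristic two. -/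
theorem SL2_sq_eq (g : Matrix.SpecialLinearGroup (Fin 2) K) :
    (g : Matrix (Fin 2) (Fin 2) K) ^ 2 = (g : Matrix (Fin 2) (Fin 2) K).trace • g.1 + 1 := by
  have h2 : (2 : K) = 0 := CharTwo.two_eq_zero
  have hd := g.2
  rw [det_fin_two] at hd
  ext i j
  fin_cases i <;> fin_cases j <;>
    simp [sq, mul_apply, Fin.sum_univ_two, trace_fin_two] <;> grind

theorem SL2_sq_eq_one_iff (g : Matrix.SpecialLinearGroup (Fin 2) K) :
    g ^ 2 = 1 ↔ (g : Matrix (Fin 2) (Fin 2) K).trace = 0 := by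
  have hiff : g ^ 2 = 1 ↔ (g : Matrix (Fin 2) (Fin 2) K) ^ 2 = 1 :=
    ⟨fun h => by rw [← Matrix.SpecialLinearGroup.coe_pow, h]; rfl,
      fun h => Subtype.ext ((Matrix.SpecialLinearGroup.coe_pow g 2).trans h)⟩
  rw [hiff, SL2_sq_eq]
  constructor
  · intro h
    have h0 : (g : Matrix (Fin 2) (Fin 2) K).trace • g.1 = 0 := by simpa using h
    rcases smul_eq_zero.mp h0 with h0 | h0
    · exact h0
    · have := g.2
      rw [h0] at this
      simp at this
  · intro h; simp [h]

/-- If `g ^ 8 = 1` then `(g - 1) ^ 8 = 0`, so `g - 1` is nilpotent and `g` has trace `0`. -/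
theorem SL2_sq_eq_one_of_pow_eight (g : Matrix.SpecialLinearGroup (Fin 2) K) (hg : g ^ 8 = 1) :
    g ^ 2 = 1 := by
  have hgm : (g : Matrix (Fin 2) (Fin 2) K) ^ 8 = 1 := by
    rw [← Matrix.SpecialLinearGroup.coe_pow, hg]; rfl
  have hnil : IsNilpotent ((g : Matrix (Fin 2) (Fin 2) K) - 1) := by
    refine ⟨2 ^ 3, ?_⟩
    rw [sub_pow_char_pow_of_commute (p := 2) (h := Commute.one_right _)]
    simp [hgm]
  have ht := (Matrix.isNilpotent_trace_of_isNilpotent hnil).eq_zero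
  rw [SL2_sq_eq_one_iff]
  rw [trace_sub, trace_one] at ht
  simpa [CharTwo.two_eq_zero] using ht

variable [Finite K]

/-- A matrix of trace `0` and determinant `1` is determined by its off-diagonal entries `b`, `c`,
which are arbitrary: the diagonal entry is the unique square root of `1 + b * c`. -/
theorem card_SL2_sq_eq_one :
    Nat.card {g : Matrix.SpecialLinearGroup (Fin 2) K // g ^ 2 = 1} = Nat.card K * Nat.card K := by
  rw [← Nat.card_prod]
  have h2 : (2 : K) = 0 := CharTwo.two_eq_zero
  refine Nat.card_congr (Equiv.ofBijective
    (fun g => ((g.1 : Matrix (Fin 2) (Fin 2) K) 0 1, (g.1 : Matrix (Fin 2) (Fin 2) K) 1 0)) ⟨?_, ?_⟩)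
  · rintro ⟨g, hg⟩ ⟨h, hh⟩ hgh
    rw [SL2_sq_eq_one_iff, trace_fin_two] at hg hh
    simp only [Prod.mk.injEq] at hgh
    have hdg := g.2
    have hdh := h.2
    rw [det_fin_two] at hdg hdh
    have h00 : (g.1 0 0 - h.1 0 0) ^ 2 = 0 := by
      grind
    have h00 : g.1 0 0 = h.1 0 0 :=
      sub_eq_zero.mp (pow_eq_zero_iff two_ne_zero |>.mp h00)
    apply Subtype.ext
    apply Subtype.ext
    ext i j
    fin_cases i <;> fin_cases j <;> simp <;> grind
  · rintro ⟨b, c⟩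
    let a := (frobeniusEquiv K 2).symm (1 + b * c)
    have ha : a ^ 2 = 1 + b * c := frobeniusEquiv_symm_pow_p K 2 _
    refine ⟨⟨mkSL2 a b c a (by grind), ?_⟩, by simp [coe_mkSL2]⟩
    rw [SL2_sq_eq_one_iff]
    simp [coe_mkSL2, trace_fin_two, CharTwo.add_self_eq_zero]

/-- Every involution of `SL(2, K)` is conjugate to the standard transvection. -/
theorem SL2_isConj_transvection (g : Matrix.SpecialLinearGroup (Fin 2) K) (hg : g ^ 2 = 1)
    (h1 : g ≠ 1) :
    IsConj (mkSL2 (1 : K) 1 0 1 (by simp)) g := by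
  have h2 : (2 : K) = 0 := CharTwo.two_eq_zero
  rw [SL2_sq_eq_one_iff, trace_fin_two] at hg
  have hd := g.2
  rw [det_fin_two] at hd
  obtain ⟨a, b, c, e, hgm⟩ : ∃ a b c e, g.1 = !![a, b; c, e] :=
    ⟨_, _, _, _, eta_fin_two g.1⟩
  simp [hgm] at hg hd
  -- The conjugating matrix has columns `g v - v` and `v`, where `v` is a multiple of the second
  -- basis vector if `c = 0` and of the first one otherwise, scaled to make the determinant `1`.
  by_cases hc : c = 0
  · subst hc
    have ha : a = 1 := by
      have : (a - 1) ^ 2 = 0 := by grind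
      exact sub_eq_zero.mp (pow_eq_zero_iff two_ne_zero |>.mp this)
    have hb : b ≠ 0 := by
      rintro rfl
      apply h1
      apply Subtype.ext
      rw [hgm]
      ext i j
      fin_cases i <;> fin_cases j <;> simp <;> grind
    let s := (frobeniusEquiv K 2).symm b⁻¹
    have hs : s ^ 2 = b⁻¹ := frobeniusEquiv_symm_pow_p K 2 _
    refine isConj_iff.mpr ⟨mkSL2 (b * s) 0 0 s (by grind), ?_⟩
    rw [mul_inv_eq_iff_eq_mul]
    apply Subtype.ext
    simp only [Matrix.SpecialLinearGroup.coe_mul, hgm, coe_mkSL2]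
    ext i j
    fin_cases i <;> fin_cases j <;> simp <;> grind
  · let s := (frobeniusEquiv K 2).symm c⁻¹
    have hs : s ^ 2 = c⁻¹ := frobeniusEquiv_symm_pow_p K 2 _
    refine isConj_iff.mpr ⟨mkSL2 ((a + 1) * s) s (c * s) 0 (by grind), ?_⟩
    rw [mul_inv_eq_iff_eq_mul]
    apply Subtype.ext
    simp only [Matrix.SpecialLinearGroup.coe_mul, hgm, coe_mkSL2]
    ext i j
    fin_cases i <;> fin_cases j <;> simp <;> grind
end SL

/-! ### The facts about `PSL(2,8)` that are used -/

/-- The properties of `PSL(2,8)` on which the argument rests: its order is `504`, its elements of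
order dividing `8` have order at most `2`, and its involutions, `63` in number, are all
conjugate. -/
structure IsLikePSL28 (H : Type*) [Group H] : Prop where
  card_eq : Nat.card H = 504
  sq_eq_one : ∀ g : H, g ^ 8 = 1 → g ^ 2 = 1
  card_invol : {t : H | t ^ 2 = 1 ∧ t ≠ 1}.ncard = 63
  isConj : ∀ s t : H, s ^ 2 = 1 → s ≠ 1 → t ^ 2 = 1 → t ≠ 1 → IsConj s t

theorem isLikePSL28_of_mulEquiv {H : Type*} [Group H]
    (e : H ≃* Matrix.ProjectiveSpecialLinearGroup (Fin 2) (GaloisField 2 3)) : IsLikePSL28 H := by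
  have hK : Nat.card (GaloisField 2 3) = 8 := by rw [GaloisField.card _ _ (by norm_num)]; norm_num
  have : Finite (GaloisField 2 3) := Nat.finite_of_card_ne_zero (by omega)
  let f : H ≃* Matrix.SpecialLinearGroup (Fin 2) (GaloisField 2 3) :=
    e.trans ((QuotientGroup.quotientMulEquivOfEq center_SL2_eq_bot).trans QuotientGroup.quotientBot)
  have hcard : Nat.card H = 504 := by
    rw [Nat.card_congr f.toEquiv, card_SL2_of_card_eq_eight hK]
  have hfin : Finite H := Nat.finite_of_card_ne_zero (by omega)
  have hpow (g : H) (n : ℕ) : g ^ n = 1 ↔ f g ^ n = 1 := by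
    rw [← map_pow, MulEquiv.map_eq_one_iff]
  refine ⟨hcard, fun g hg => ?_, ?_, fun s t hs hs1 ht ht1 => ?_⟩
  · rw [hpow] at hg ⊢
    exact SL2_sq_eq_one_of_pow_eight _ hg
  · have h64 : {t : H | t ^ 2 = 1}.ncard = 64 := by
      rw [← Nat.card_coe_set_eq]
      refine (Nat.card_congr (f.toEquiv.subtypeEquiv (q := fun g => g ^ 2 = 1)
        fun g => hpow g 2)).trans ?_
      rw [card_SL2_sq_eq_one, hK]
    have : {t : H | t ^ 2 = 1 ∧ t ≠ 1} = {t : H | t ^ 2 = 1} \ {1} := by ext; simp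
    rw [this, Set.ncard_sdiff_singleton_of_mem (by simp), h64]
  · have key (t : H) (ht : t ^ 2 = 1) (ht1 : t ≠ 1) :=
      SL2_isConj_transvection (f t) ((hpow t 2).mp ht) (by simpa using ht1)
    have := f.symm.toMonoidHom.map_isConj ((key s hs hs1).symm.trans (key t ht ht1))
    simpa using! this

/-! ### Counting and permutation groups of degree four -/

/-- Double counting for a relation with constant row and column sums. -/
theorem ncard_mul_eq_ncard_mul {α β : Type*} [Finite α] [Finite β] (r : α → β → Prop)
    (s : Set α) (t : Set β) {m n : ℕ} (hm : ∀ a ∈ s, {b | b ∈ t ∧ r a b}.ncard = m)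
    (hn : ∀ b ∈ t, {a | a ∈ s ∧ r a b}.ncard = n) : s.ncard * m = t.ncard * n := by
  classical
  have := Fintype.ofFinite α
  have := Fintype.ofFinite β
  rw [Set.ncard_eq_toFinset_card' s, Set.ncard_eq_toFinset_card' t]
  refine Finset.card_mul_eq_card_mul r (fun a ha => ?_) (fun b hb => ?_)
  · rw [← hm a (by simpa using ha), Set.ncard_eq_toFinset_card']
    congr 1; ext; simp
  · rw [← hn b (by simpa using hb), Set.ncard_eq_toFinset_card']
    congr 1; ext; simp

/-- An elementary abelian group of order `8` cannot act faithfully on four points: it would be a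
Sylow `2`-subgroup of the symmetric group, and so contain a conjugate of a `4`-cycle. -/
theorem exists_ne_one_smul_trivial {S : Type*} [Group S] (hS : Nat.card S = 8)
    (hsq : ∀ g : S, g ^ 2 = 1) {β : Type*} [MulAction S β] (hβ : Nat.card β = 4) :
    ∃ g : S, g ≠ 1 ∧ ∀ y : β, g • y = y := by
  classical
  have hβfin : Finite β := Nat.finite_of_card_ne_zero (by omega)
  by_contra! hne
  let φ : S →* Equiv.Perm β := MulAction.toPermHom S β
  have hinj : Function.Injective φ := by
    rw [injective_iff_map_eq_one]
    intro g hg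
    by_contra h1
    obtain ⟨y, hy⟩ := hne g h1
    exact hy (DFunLike.congr_fun hg y)
  have hperm : Nat.card (Equiv.Perm β) = 24 := by
    rw [Nat.card_perm, hβ]; rfl
  have hrange : Nat.card φ.range = 2 ^ (Nat.card (Equiv.Perm β)).factorization 2 := by
    rw [← Nat.card_congr (MonoidHom.ofInjective hinj).toEquiv, hS, hperm,
      show 24 = 2 ^ 3 * 3 by norm_num, Nat.factorization_mul (by norm_num) (by norm_num),
      Nat.factorization_pow]
    simp [Nat.Prime.factorization, Nat.prime_two, Nat.prime_three]
  let P : Sylow 2 (Equiv.Perm β) := Sylow.ofCard φ.range hrange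
  -- `c` is a `4`-cycle.
  let e : β ≃ Fin 4 := Finite.equivFinOfCardEq hβ
  let c : Equiv.Perm β := e.symm.permCongr (finRotate 4)
  have hc4 : c ^ 2 ^ 2 = 1 := by
    have : (finRotate 4) ^ 2 ^ 2 = 1 := by decide
    change (e.symm.permCongrHom (finRotate 4)) ^ 2 ^ 2 = 1
    rw [← map_pow, this, map_one]
  have hc2 : c ^ 2 ≠ 1 := by
    have : (finRotate 4) ^ 2 ≠ 1 := by decide
    change (e.symm.permCongrHom (finRotate 4)) ^ 2 ≠ 1
    rwa [← map_pow, Ne, MulEquiv.map_eq_one_iff]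
  have hpg : IsPGroup 2 (Subgroup.zpowers c) := by
    refine IsPGroup.of_card (n := 2) ?_
    rw [Nat.card_zpowers]
    exact orderOf_eq_prime_pow (by simpa using hc2) hc4
  obtain ⟨Q, hQ⟩ := hpg.exists_le_sylow
  obtain ⟨σ, hσ⟩ := MulAction.exists_smul_eq (Equiv.Perm β) Q P
  have hmem : σ * c * σ⁻¹ ∈ φ.range := by
    have h1 : σ * c * σ⁻¹ ∈ σ • Q :=
      Subgroup.smul_mem_pointwise_smul c (MulAut.conj σ) (Q : Subgroup _)
        (hQ (Subgroup.mem_zpowers c))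
    rw [hσ] at h1
    exact h1
  obtain ⟨g, hg⟩ := hmem
  apply hc2
  have h2 : (σ * c * σ⁻¹) ^ 2 = 1 := by rw [← hg, ← map_pow, hsq, map_one]
  rw [conj_pow] at h2
  simpa [mul_inv_eq_one] using h2

/-! ### Designs with parameters `2-(28,4,3)` -/

section Design
variable {Pt : Type*} [Finite Pt] {G : Type*} [Group G] [MulAction G Pt] {𝓑 : Set (Set Pt)}

theorem ncard_blocks_through (hcard : Nat.card Pt = 28) (hD : IsDesign 𝓑 4 3) (x : Pt) :
    {B | B ∈ 𝓑 ∧ x ∈ B}.ncard = 27 := by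
  have h := ncard_mul_eq_ncard_mul (fun (B : Set Pt) y => y ∈ B) {B | B ∈ 𝓑 ∧ x ∈ B} {x}ᶜ
    (m := 3) (n := 3) ?_ ?_
  · rw [Set.ncard_compl, hcard, Set.ncard_singleton] at h
    omega
  · rintro B ⟨hB, hx⟩
    have h4 : B.ncard = 4 := hD.block_card B hB
    have : {b | b ∈ ({x}ᶜ : Set Pt) ∧ b ∈ B} = B \ {x} := by ext; simp [and_comm]
    rw [this, Set.ncard_sdiff_singleton_of_mem hx, h4]
  · intro y hy
    rw [← hD.pair_count x y (fun h => hy h.symm), Nat.card_coe_set_eq]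
    simp only [Set.mem_ofPred_eq, and_assoc]

theorem ncard_blocks (hcard : Nat.card Pt = 28) (hD : IsDesign 𝓑 4 3) : 𝓑.ncard = 189 := by
  have h := ncard_mul_eq_ncard_mul (fun (B : Set Pt) y => y ∈ B) 𝓑 Set.univ
    (m := 4) (n := 27) ?_ ?_
  · rw [Set.ncard_univ, hcard] at h
    omega
  · intro B hB
    simpa using! hD.block_card B hB
  · intro y _
    exact ncard_blocks_through hcard hD y

theorem exists_block_through (hcard : Nat.card Pt = 28) (hD : IsDesign 𝓑 4 3) (x : Pt) :
    ∃ B ∈ 𝓑, x ∈ B := by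
  have : {B | B ∈ 𝓑 ∧ x ∈ B}.Nonempty := by
    rw [← Set.ncard_pos, ncard_blocks_through hcard hD x]; norm_num
  exact this

/-- The orbit size of a normal subgroup is constrained by counting the pairs `(y, B)` with `y ≠ x` in
the orbit of `x` and `x, y ∈ B`; here `c` is the number of such `y` in a block through `x`. -/
theorem ncard_orbit_eq (hcard : Nat.card Pt = 28) (hD : IsDesign 𝓑 4 3)
    (hflag : FlagTransitive G 𝓑) (X : Subgroup G) [X.Normal] (x : Pt) :
    ∃ c ≤ 3, (MulAction.orbit X x).ncard = 9 * c + 1 := by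
  set O := MulAction.orbit X x with hO
  have hxO : x ∈ O := MulAction.mem_orbit_self x
  have hgO (g : G) (hg : g • x = x) (y : Pt) (hy : y ∈ O) : g • y ∈ O := by
    obtain ⟨h, rfl⟩ := hy
    refine ⟨⟨g * h * g⁻¹, Subgroup.Normal.conj_mem inferInstance _ h.2 g⟩, ?_⟩
    change (g * h * g⁻¹) • x = g • (h : G) • x
    rw [mul_smul, inv_smul_eq_iff.mpr hg.symm, mul_smul]
  obtain ⟨B, hB, hxB⟩ := exists_block_through hcard hD x
  have hle (C D : Set Pt) (hC : C ∈ 𝓑) (hDB : D ∈ 𝓑) (hxC : x ∈ C) (hxD : x ∈ D) :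
      (C ∩ (O \ {x})).ncard ≤ (D ∩ (O \ {x})).ncard := by
    obtain ⟨g, rfl, hg⟩ := hflag C hC D hDB x hxC x hxD
    refine Set.ncard_le_ncard_of_injOn (fun y => g • y) ?_ (MulAction.injective g).injOn
    rintro y ⟨hyC, hyO, hyx⟩
    refine ⟨Set.smul_mem_smul_set hyC, hgO g hg y hyO, fun h => hyx ?_⟩
    exact MulAction.injective g ((Set.mem_singleton_iff.mp h).trans hg.symm)
  refine ⟨(B ∩ (O \ {x})).ncard, ?_, ?_⟩
  · have h4 : B.ncard = 4 := hD.block_card B hB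
    have : (B \ {x}).ncard = 3 := by rw [Set.ncard_sdiff_singleton_of_mem hxB, h4]
    rw [← this]
    exact Set.ncard_le_ncard fun y hy => ⟨hy.1, hy.2.2⟩
  · have h := ncard_mul_eq_ncard_mul (fun (B : Set Pt) y => y ∈ B) {B | B ∈ 𝓑 ∧ x ∈ B} (O \ {x})
      (m := (B ∩ (O \ {x})).ncard) (n := 3) ?_ ?_
    · rw [ncard_blocks_through hcard hD] at h
      have h1 := Set.ncard_sdiff_singleton_add_one hxO
      omega
    · rintro C ⟨hC, hxC⟩
      refine Eq.trans (congrArg Set.ncard ?_)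
        (le_antisymm (hle C B hC hB hxC hxB) (hle B C hB hC hxB hxC))
      ext y
      exact and_comm
    · rintro y ⟨-, hy⟩
      rw [← hD.pair_count x y (fun h => hy h.symm), Nat.card_coe_set_eq]
      simp only [Set.mem_ofPred_eq, and_assoc]

/-- `X` is transitive on points, expressed by orbit sizes. -/
theorem ncard_orbit_eq_card [FaithfulSMul G Pt] (hcard : Nat.card Pt = 28) (hD : IsDesign 𝓑 4 3)
    (hflag : FlagTransitive G 𝓑) (X : Subgroup G) [X.Normal] (hX : Nat.card X = 504) (x : Pt) :
    (MulAction.orbit X x).ncard = 28 := by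
  obtain ⟨c, hc, hOc⟩ := ncard_orbit_eq hcard hD hflag X x
  have hdvd : (MulAction.orbit X x).ncard ∣ 504 := by
    rw [← hX, ← MulAction.index_stabilizer]
    exact Subgroup.index_dvd_card _
  rw [hOc] at hdvd ⊢
  interval_cases c
  -- If the orbit were a single point, the normal subgroup `X` would fix every point.
  · exfalso
    have hfix (h : X) : h • x = x := by
      obtain ⟨a, ha⟩ := Set.ncard_eq_one.mp hOc
      have h1 : x ∈ MulAction.orbit X x := MulAction.mem_orbit_self x
      have h2 : h • x ∈ MulAction.orbit X x := MulAction.mem_orbit x h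
      rw [ha, Set.mem_singleton_iff] at h1 h2
      rw [h2, h1]
    have hbot : ∀ h ∈ X, h = 1 := by
      intro h hh
      apply FaithfulSMul.eq_of_smul_eq_smul (α := Pt)
      intro y
      obtain ⟨B, hB, hxB⟩ := exists_block_through hcard hD x
      obtain ⟨C, hC, hyC⟩ := exists_block_through hcard hD y
      obtain ⟨g, -, rfl⟩ := hflag B hB C hC x hxB y hyC
      have := hfix ⟨g⁻¹ * h * g, by
        simpa using Subgroup.Normal.conj_mem ‹X.Normal› _ hh g⁻¹⟩
      change (g⁻¹ * h * g) • x = x at this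
      rw [one_smul]
      rwa [mul_smul, mul_smul, inv_smul_eq_iff] at this
    rw [(Subgroup.eq_bot_iff_forall X).mpr hbot, Subgroup.card_bot] at hX
    omega
  · omega
  · omega
  · rfl

/-- The block set as a `G`-invariant subset of the set of all subsets of `Pt`. -/
def blockAction (hacts : ActsOn G 𝓑) : SubMulAction G (Set Pt) where
  carrier := 𝓑
  smul_mem' g _ hB := hacts g _ hB

theorem exists_involution_fixing_block (hcard : Nat.card Pt = 28) (hD : IsDesign 𝓑 4 3)
    (hacts : ActsOn G 𝓑) (hflag : FlagTransitive G 𝓑) (X : Subgroup G) [X.Normal]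
    (hX : IsLikePSL28 X) (C : Set Pt) (hC : C ∈ 𝓑) :
    ∃ t : X, (t ^ 2 = 1 ∧ t ≠ 1) ∧ ∀ y ∈ C, t • y = y := by
  have hfin : Finite X := Nat.finite_of_card_ne_zero (by rw [hX.card_eq]; norm_num)
  have : Fact (Nat.Prime 2) := ⟨Nat.prime_two⟩
  obtain ⟨S, hS⟩ := Sylow.exists_subgroup_card_pow_prime (G := X) 2 (n := 3)
    (by rw [hX.card_eq]; norm_num)
  have hSp : IsPGroup 2 S := IsPGroup.of_card hS
  obtain ⟨⟨B, hB⟩, hBfix⟩ := hSp.nonempty_fixed_point_of_prime_not_dvd_card (blockAction hacts) (by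
    have : Nat.card (blockAction hacts) = 189 := ncard_blocks hcard hD
    rw [this]; norm_num)
  replace hB : B ∈ 𝓑 := hB
  have hsB (s : S) : ((s : X) : G) • B = B := congrArg Subtype.val (hBfix s)
  let SB : SubMulAction S Pt :=
    { carrier := B
      smul_mem' := fun s y hy => by
        have := Set.smul_mem_smul_set (a := ((s : X) : G)) hy
        rwa [hsB] at this }
  have hsq (s : S) : s ^ 2 = 1 := by
    apply Subtype.ext
    refine hX.sq_eq_one s ?_
    have : s ^ Nat.card S = 1 := pow_card_eq_one'
    rw [hS] at this
    exact congrArg Subtype.val this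
  obtain ⟨s, hs1, hs⟩ := exists_ne_one_smul_trivial (S := S) hS hsq (β := SB)
    (hD.block_card B hB)
  -- Some `g` maps `B` to `C`; conjugating `s` by `g` yields an involution fixing `C` pointwise.
  have hne (D : Set Pt) (hDB : D ∈ 𝓑) : D.Nonempty := by
    have h4 : D.ncard = 4 := hD.block_card D hDB
    rw [← Set.ncard_pos, h4]; norm_num
  obtain ⟨x, hx⟩ := hne B hB
  obtain ⟨y, hy⟩ := hne C hC
  obtain ⟨g, rfl, -⟩ := hflag B hB C hC x hx y hy
  have hs2 : ((s : X) : G) ^ 2 = 1 := congrArg (fun s : S => ((s : X) : G)) (hsq s)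
  refine ⟨⟨g * s * g⁻¹, Subgroup.Normal.conj_mem inferInstance _ (s : X).2 g⟩, ⟨?_, ?_⟩, ?_⟩
  · apply Subtype.ext
    change (g * s * g⁻¹) ^ 2 = 1
    rw [conj_pow, hs2, mul_one, mul_inv_cancel]
  · intro h
    have h : g * s * g⁻¹ = 1 := congrArg Subtype.val h
    rw [mul_inv_eq_one, mul_eq_left] at h
    exact hs1 (Subtype.ext (Subtype.ext h))
  · rintro _ ⟨z, hz, rfl⟩
    have hsz : ((s : X) : G) • z = z := congrArg Subtype.val (hs ⟨z, hz⟩)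
    change (g * s * g⁻¹) • g • z = g • z
    rw [← mul_smul, inv_mul_cancel_right, mul_smul, hsz]

/-- If `X` is transitive on the `28` points, an involution fixes at most four of them: the number
`f` of its fixed points satisfies `63 f = 28 i`, where `i < 18` is the number of involutions
in a point stabilizer. -/
theorem ncard_fixedPoints_le {X : Type*} [Group X] [MulAction X Pt] (hX : IsLikePSL28 X)
    (hcard : Nat.card Pt = 28) (horb : ∀ x : Pt, (MulAction.orbit X x).ncard = 28)
    (t : X) (ht : t ^ 2 = 1 ∧ t ≠ 1) : {x : Pt | t • x = x}.ncard ≤ 4 := by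
  have hfin : Finite X := Nat.finite_of_card_ne_zero (by rw [hX.card_eq]; norm_num)
  have htrans (x y : Pt) : ∃ g : X, g • x = y := by
    have : MulAction.orbit X x = Set.univ := by
      rw [Set.eq_univ_iff_ncard, horb, hcard]
    have hy : y ∈ MulAction.orbit X x := this ▸ Set.mem_univ y
    exact hy
  have : Nonempty Pt := (Nat.card_pos_iff.mp (by omega)).1
  obtain ⟨x₀⟩ := this
  let I : Set X := {t | t ^ 2 = 1 ∧ t ≠ 1}
  have hconj (g s : X) (hs : s ∈ I) : g * s * g⁻¹ ∈ I := by
    refine ⟨?_, ?_⟩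
    · rw [conj_pow, hs.1, mul_one, mul_inv_cancel]
    · rw [Ne, mul_inv_eq_one, mul_eq_left]; exact hs.2
  have hf (s u : X) (hs : s ∈ I) (hu : u ∈ I) :
      {x : Pt | s • x = x}.ncard ≤ {x : Pt | u • x = x}.ncard := by
    obtain ⟨g, rfl⟩ := isConj_iff.mp (hX.isConj s u hs.1 hs.2 hu.1 hu.2)
    refine Set.ncard_le_ncard_of_injOn (fun y => g • y) ?_ (MulAction.injective g).injOn
    intro y hy
    change (g * s * g⁻¹) • g • y = g • y
    rw [← mul_smul, inv_mul_cancel_right, mul_smul, hy]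
  have hi (x y : Pt) : {s | s ∈ I ∧ s • x = x}.ncard ≤ {s | s ∈ I ∧ s • y = y}.ncard := by
    obtain ⟨g, rfl⟩ := htrans x y
    refine Set.ncard_le_ncard_of_injOn (fun s => g * s * g⁻¹) ?_ (MulAut.conj g).injective.injOn
    rintro s ⟨hs, hsx⟩
    refine ⟨hconj g s hs, ?_⟩
    rw [← mul_smul, inv_mul_cancel_right, mul_smul, hsx]
  have hcount := ncard_mul_eq_ncard_mul (fun (s : X) (x : Pt) => s • x = x) I Set.univ
    (m := {x : Pt | t • x = x}.ncard) (n := {s | s ∈ I ∧ s • x₀ = x₀}.ncard)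
    (fun s hs => by simpa using le_antisymm (hf s t hs ht) (hf t s ht hs))
    (fun y _ => le_antisymm (hi y x₀) (hi x₀ y))
  have hI : I.ncard = 63 := hX.card_invol
  rw [hI, Set.ncard_univ, hcard] at hcount
  have hstab : Nat.card (MulAction.stabilizer X x₀) = 18 := by
    have := (MulAction.stabilizer X x₀).card_mul_index
    rw [MulAction.index_stabilizer, horb, hX.card_eq] at this
    omega
  have hlt : {s | s ∈ I ∧ s • x₀ = x₀}.ncard < 18 := by
    rw [← hstab, ← SetLike.coe_sort_coe, Nat.card_coe_set_eq]
    refine Set.ncard_lt_ncard ⟨fun s hs => hs.2, fun h => ?_⟩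
    exact (h (one_mem (MulAction.stabilizer X x₀))).1.2 rfl
  omega

end Design

/-- There is no `2-(28,4,3)` design admitting a flag-transitive
automorphism group `G` with `PSL(2,8) ⊴ G ≤ PΓL(2,8)`; the sandwich condition is encoded by
saying that `G` is almost simple with socle `X ≅ PSL(2,8)` (since `Aut(PSL(2,8)) = PΓL(2,8)`).
Here `PSL(2,8)` is realized over the field `GaloisField 2 3` with 8 elements. -/
theorem stmt_19 {Pt : Type*} [Fintype Pt] {G : Type*} [Group G] [MulAction G Pt]
    [FaithfulSMul G Pt]
    (𝓑 : Set (Set Pt)) (hcard : Nat.card Pt = 28)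
    (hD : IsDesign 𝓑 4 3)
    (hacts : ActsOn G 𝓑) (hflag : FlagTransitive G 𝓑)
    (X : Subgroup G) (hXnormal : X.Normal)
    (hXiso : Nonempty (X ≃* PSL2 (GaloisField 2 3)))
    (hXcent : Subgroup.centralizer (X : Set G) = ⊥) :
    False := by
  obtain ⟨e⟩ := hXiso
  have hX : IsLikePSL28 X := isLikePSL28_of_mulEquiv e
  have hfin : Finite X := Nat.finite_of_card_ne_zero (by rw [hX.card_eq]; norm_num)
  have horb := ncard_orbit_eq_card hcard hD hflag X hX.card_eq
  choose! τ hτ hfix using exists_involution_fixing_block hcard hD hacts hflag X hX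
  have heq (B : Set Pt) (hB : B ∈ 𝓑) : B = {x | τ B • x = x} := by
    refine Set.eq_of_subset_of_ncard_le (fun y hy => hfix B hB y hy) ?_
    have h4 : B.ncard = 4 := hD.block_card B hB
    rw [h4]
    exact ncard_fixedPoints_le hX hcard horb (τ B) (hτ B hB)
  have hle : 𝓑.ncard ≤ {t : X | t ^ 2 = 1 ∧ t ≠ 1}.ncard := by
    refine Set.ncard_le_ncard_of_injOn τ hτ fun B hB C hC h => ?_
    rw [heq B hB, heq C hC, h]
  rw [ncard_blocks hcard hD, hX.card_invol] at hle
  omega
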